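/- arXiv:1110.2021 — 2 statements merged into one kernel-verified Lean document; each statement's English description precedes it below -/
import Mathlib

section
/- Let F be a field, D a division ring that is an F-algebra, K a field that is an F-algebra, m ≥ 1 and n ≥ 1, and let φ : Mₘ(D) → Mₙ(K) be an F-algebra homomorphism of matrix rings. Then for every A ∈ Mₘ(D) and λ ∈ D, λ is a left eigenvalue of A (i.e., there exists a nonzero column vector v ∈ Dᵐ with A.mulVec v = λ • v, the scalar λ acting on the left) if and only if det(φ(A − λ • 1)) = 0. -/
/-!
In an Artinian ring an element that is regular on the appropriate side is a unit, and regularity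
is reflected by injective homomorphisms; so injective homomorphisms out of an Artinian ring reflect
units. A matrix ring over a simple Artinian ring is again simple and Artinian, hence each of its
homomorphisms to a nontrivial ring is injective and reflects units. Finally, `A - lam • 1` kills a
nonzero column vector exactly when it is not left regular, that is, when it is not a unit.
-/

theorem isLocalHom_of_injective_of_isArtinianRing {R S G : Type*} [Semiring R] [IsArtinianRing R]
    [Monoid S] [FunLike G R S] [MonoidHomClass G R S] (f : G) (hf : Function.Injective f) :
    IsLocalHom f where
  map_nonunit a ha := by
    refine IsArtinianRing.isUnit_iff_isRightRegular.mpr fun b c hbc => hf ?_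
    have hmap : f b * f a = f c * f a := by
      simpa only [map_mul] using congrArg f hbc
    exact ha.mul_left_injective hmap

theorem isLocalHom_of_isSimpleRing_of_isArtinianRing {R S : Type*} [Ring R] [IsSimpleRing R]
    [IsArtinianRing R] [Semiring S] [Nontrivial S] (f : R →+* S) : IsLocalHom f :=
  isLocalHom_of_injective_of_isArtinianRing f f.injective

section Matrix

variable {R n : Type*} [Ring R] [Fintype n]

theorem mulVec_injective_iff_forall_mulVec_eq_zero {m : Type*} {A : Matrix m n R} :
    Function.Injective A.mulVec ↔ ∀ v, A.mulVec v = 0 → v = 0 :=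
  injective_iff_map_eq_zero (Matrix.mulVecBilin R Rᵐᵒᵖ A)

variable [DecidableEq n]

-- `mulVec` commutes with right scalar multiplication, so the chain condition is on right ideals.
theorem isUnit_matrix_iff_mulVec_injective [IsArtinianRing Rᵐᵒᵖ] {A : Matrix n n R} :
    IsUnit A ↔ Function.Injective A.mulVec := by
  have : IsArtinianRing (Matrix n n R)ᵐᵒᵖ := RingEquiv.mopMatrix.isArtinianRing
  rw [IsArtinianRing.isUnit_iff_isLeftRegular, Matrix.isLeftRegular_iff_mulVec_injective]

theorem exists_mulVec_eq_smul_iff_not_injective_mulVec_sub {A : Matrix n n R} {lam : R} :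
    (∃ v : n → R, v ≠ 0 ∧ A.mulVec v = lam • v) ↔
      ¬Function.Injective (A - lam • (1 : Matrix n n R)).mulVec := by
  have mulVec_sub_eq_zero_iff (v : n → R) :
      (A - lam • (1 : Matrix n n R)).mulVec v = 0 ↔ A.mulVec v = lam • v := by
    rw [Matrix.sub_mulVec, Matrix.smul_mulVec, Matrix.one_mulVec, sub_eq_zero]
  simp only [mulVec_injective_iff_forall_mulVec_eq_zero, mulVec_sub_eq_zero_iff, not_forall,
    exists_prop, and_comm, ne_eq]

theorem stmt_7_general [IsSimpleRing R] [IsArtinianRing R] {S : Type*} [Semiring S] [Nontrivial S]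
    (f : Matrix n n R →+* S) (A : Matrix n n R) (lam : R) :
    (∃ v : n → R, v ≠ 0 ∧ A.mulVec v = lam • v) ↔
      ¬IsUnit (f (A - lam • (1 : Matrix n n R))) := by
  have : Nontrivial (Matrix n n R) := f.domain_nontrivial
  have : Nonempty n := not_isEmpty_iff.mp fun _ => not_subsingleton (Matrix n n R) inferInstance
  have : IsLocalHom f := isLocalHom_of_isSimpleRing_of_isArtinianRing f
  rw [exists_mulVec_eq_smul_iff_not_injective_mulVec_sub, isUnit_map_iff,
    isUnit_matrix_iff_mulVec_injective]

end Matrix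

theorem stmt_7 (F : Type*) [Field F] (D : Type*) [DivisionRing D] [Algebra F D]
    (K : Type*) [Field K] [Algebra F K] (m n : ℕ) (hm : 1 ≤ m) (hn : 1 ≤ n)
    (φ : Matrix (Fin m) (Fin m) D →ₐ[F] Matrix (Fin n) (Fin n) K)
    (A : Matrix (Fin m) (Fin m) D) (lam : D) :
    (∃ v : Fin m → D, v ≠ 0 ∧ A.mulVec v = lam • v) ↔
      (φ (A - lam • (1 : Matrix (Fin m) (Fin m) D))).det = 0 := by
  have : Nonempty (Fin n) := ⟨⟨0, hn⟩⟩
  simpa [Matrix.isUnit_iff_isUnit_det] using stmt_7_general φ.toRingHom A lam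
end

section
/- Let D be a division ring, n ≥ 1, and let A, B, C, E be n × n matrices over D with C a unit of Mₙ(D). Let M be the 2n × 2n block matrix M = fromBlocks A B C E. Then for λ ∈ D, λ is a left eigenvalue of M (i.e., there exists a nonzero column vector v ∈ D²ⁿ with M.mulVec v = λ • v, the scalar λ acting on the left) if and only if there exists a nonzero column vector w ∈ Dⁿ with (C * (A − λ • 1) * C⁻¹ * (E − λ • 1) − C * B).mulVec w = 0. -/
/-!
Put `P = A - c • 1` and `Q = E - c • 1`, and let `K` be the inverse of `C`. The lower block row of
`fromBlocks P B C Q *ᵥ (x, y) = 0` says `x = -(K * Q) *ᵥ y`, and substituting this into the upper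
one leaves `(P * K * Q - B) *ᵥ y = 0`. Hence `(x, y) ↦ y` is a bijection between these two kernels,
and the remaining left factor `C` is injective.
-/

section

open Matrix

variable {R l m n o : Type*} [Ring R]

theorem mulVec_eq_smul_iff_sub_smul_one_mulVec_eq_zero [Fintype n] [DecidableEq n]
    (M : Matrix n n R) (c : R) (v : n → R) :
    M *ᵥ v = c • v ↔ (M - c • (1 : Matrix n n R)) *ᵥ v = 0 := by
  rw [sub_mulVec, smul_mulVec, one_mulVec, sub_eq_zero]

theorem fromBlocks_sub_smul_one [DecidableEq m] [DecidableEq n] (A : Matrix m m R)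
    (B : Matrix m n R) (C : Matrix n m R) (E : Matrix n n R) (c : R) :
    fromBlocks A B C E - c • (1 : Matrix (m ⊕ n) (m ⊕ n) R) =
      fromBlocks (A - c • (1 : Matrix m m R)) B C (E - c • (1 : Matrix n n R)) := by
  rw [← fromBlocks_one, fromBlocks_smul, sub_eq_add_neg, fromBlocks_neg, fromBlocks_add]
  simp only [smul_zero, neg_zero, add_zero, sub_eq_add_neg]

theorem mulVec_injective_of_mul_eq_one [Fintype m] [Fintype n] [DecidableEq m]
    {K : Matrix m n R} {C : Matrix n m R} (hKC : K * C = 1) : Function.Injective C.mulVec :=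
  Function.LeftInverse.injective (g := K.mulVec) fun x => by
    rw [mulVec_mulVec, hKC, one_mulVec]

section Elimination

variable [Fintype m] [Fintype n] [Fintype o] [DecidableEq m] [DecidableEq n]
  (P : Matrix l m R) (B : Matrix l o R) {C : Matrix n m R} (Q : Matrix n o R) {K : Matrix m n R}

theorem mulVec_add_mulVec_eq_zero_iff (hCK : C * K = 1) (hKC : K * C = 1)
    (x : m → R) (y : o → R) : C *ᵥ x + Q *ᵥ y = 0 ↔ x = -((K * Q) *ᵥ y) := by
  have hQ : C *ᵥ (-((K * Q) *ᵥ y)) = -(Q *ᵥ y) := by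
    rw [mulVec_neg, mulVec_mulVec, ← Matrix.mul_assoc, hCK, Matrix.one_mul]
  rw [add_eq_zero_iff_eq_neg, ← hQ, (mulVec_injective_of_mul_eq_one hKC).eq_iff]

theorem fromBlocks_mulVec_sumElim_eq_zero_iff (hCK : C * K = 1) (hKC : K * C = 1)
    (x : m → R) (y : o → R) :
    fromBlocks P B C Q *ᵥ Sum.elim x y = 0 ↔
      x = -((K * Q) *ᵥ y) ∧ (P * K * Q - B) *ᵥ y = 0 := by
  rw [fromBlocks_mulVec, Sum.elim_comp_inl, Sum.elim_comp_inr, ← Sum.elim_zero_zero,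
    Sum.elim_eq_iff, mulVec_add_mulVec_eq_zero_iff Q hCK hKC, and_comm]
  refine and_congr_right fun hx => ?_
  rw [hx, mulVec_neg, mulVec_mulVec, ← Matrix.mul_assoc, neg_add_eq_zero, sub_mulVec,
    sub_eq_zero]

theorem exists_ne_zero_fromBlocks_mulVec_eq_zero_iff (hCK : C * K = 1) (hKC : K * C = 1) :
    (∃ v : m ⊕ o → R, v ≠ 0 ∧ fromBlocks P B C Q *ᵥ v = 0) ↔
      ∃ w : o → R, w ≠ 0 ∧ (P * K * Q - B) *ᵥ w = 0 := by
  constructor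
  · rintro ⟨v, hv, hker⟩
    obtain ⟨x, y, rfl⟩ : ∃ x y, v = Sum.elim x y := ⟨_, _, (Sum.elim_comp_inl_inr v).symm⟩
    obtain ⟨rfl, hy⟩ := (fromBlocks_mulVec_sumElim_eq_zero_iff P B Q hCK hKC x y).mp hker
    refine ⟨y, ?_, hy⟩
    rintro rfl
    exact hv (by rw [mulVec_zero, neg_zero, Sum.elim_zero_zero])
  · rintro ⟨y, hy, hker⟩
    refine ⟨Sum.elim (-((K * Q) *ᵥ y)) y, fun h => hy ?_,
      (fromBlocks_mulVec_sumElim_eq_zero_iff P B Q hCK hKC _ y).mpr ⟨rfl, hker⟩⟩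
    exact congrArg (· ∘ Sum.inr) h

end Elimination

theorem stmt_8_general [Fintype m] [Fintype n] [DecidableEq m] [DecidableEq n]
    (A : Matrix m m R) (B : Matrix m n R) {C : Matrix n m R} (E : Matrix n n R)
    {K : Matrix m n R} (hCK : C * K = 1) (hKC : K * C = 1) (c : R) :
    (∃ v : m ⊕ n → R, v ≠ 0 ∧ fromBlocks A B C E *ᵥ v = c • v) ↔
      ∃ w : n → R, w ≠ 0 ∧
        (C * (A - c • (1 : Matrix m m R)) * K * (E - c • (1 : Matrix n n R)) - C * B) *ᵥ w =
          0 := by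
  have cancel_C (P : Matrix m m R) (Q : Matrix n n R) (w : n → R) :
      (C * P * K * Q - C * B) *ᵥ w = 0 ↔ (P * K * Q - B) *ᵥ w = 0 := by
    have hfactor : C * P * K * Q - C * B = C * (P * K * Q - B) := by
      simp only [Matrix.mul_sub, Matrix.mul_assoc]
    rw [hfactor, ← mulVec_mulVec, ← mulVec_zero C,
      (mulVec_injective_of_mul_eq_one hKC).eq_iff]
  simp only [mulVec_eq_smul_iff_sub_smul_one_mulVec_eq_zero, fromBlocks_sub_smul_one, cancel_C]
  exact exists_ne_zero_fromBlocks_mulVec_eq_zero_iff _ B _ hCK hKC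

end

theorem stmt_8 (D : Type*) [DivisionRing D] (n : ℕ) (hn : 1 ≤ n)
    (A B C E : Matrix (Fin n) (Fin n) D) (hC : IsUnit C) (lam : D) :
    (∃ v : Fin n ⊕ Fin n → D, v ≠ 0 ∧
        (Matrix.fromBlocks A B C E).mulVec v = lam • v) ↔
      ∃ w : Fin n → D, w ≠ 0 ∧
        (C * (A - lam • (1 : Matrix (Fin n) (Fin n) D)) *
            (hC.unit⁻¹).val *
            (E - lam • (1 : Matrix (Fin n) (Fin n) D)) - C * B).mulVec w = 0 :=
  stmt_8_general A B E hC.mul_val_inv hC.val_inv_mul lam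
end
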